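/- Let (G,P) be a quasi-lattice ordered group, (E,φ) a finitely aligned product system of graphs over P, and {t_λ : λ ∈ E¹} a Toeplitz–Cuntz–Krieger E-family in a C*-algebra B. Let F ⊆ E¹ be finite with s(λ) ∈ F for every λ ∈ F, let λ ∈ F have d(λ) ≠ e, and set G := F ∖ {λ}. Then for every δ ∈ ∨F ∖ ∨G, Q^{∨F}_δ = Q^{∨G}_{μ_δ} t_δ t_δ*, where μ_δ is the unique element of ∨G such that every μ ∈ ∨G with δ(e,d(μ)) = μ has d(μ) ≤ d(μ_δ). -/

import Mathlib

open scoped Classical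

noncomputable section

namespace PSG

variable {G : Type*} [Group G] {Λ : Type*}

/-- `g ≤ h` in the left-invariant partial order induced by the submonoid `P`. -/
def qle (P : Submonoid G) (g h : G) : Prop := g⁻¹ * h ∈ P

/-- `r` is a common upper bound of `p` and `q` in `P`. -/
def IsUB (P : Submonoid G) (p q r : G) : Prop := r ∈ P ∧ qle P p r ∧ qle P q r

/-- `r` is the least common upper bound of `p` and `q` in `P`. -/
def IsLUB2 (P : Submonoid G) (p q r : G) : Prop :=
  IsUB P p q r ∧ ∀ r', IsUB P p q r' → qle P r r'

/-- `r` is the least upper bound in `P` of the set of degrees `D`. -/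
def IsLUBFam (P : Submonoid G) (D : Set G) (r : G) : Prop :=
  r ∈ P ∧ (∀ p ∈ D, qle P p r) ∧ ∀ r' ∈ P, (∀ p ∈ D, qle P p r') → qle P r r'

/-- `(G, P)` is quasi-lattice ordered: `P ∩ P⁻¹ = {1}` and every pair of elements of `P`
with a common upper bound in `P` has a least upper bound in `P`. -/
def QuasiLatticeOrdered (P : Submonoid G) : Prop :=
  (∀ g ∈ P, g⁻¹ ∈ P → g = 1) ∧
    ∀ p ∈ P, ∀ q ∈ P, (∃ r, IsUB P p q r) → ∃ r, IsLUB2 P p q r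

/-- A product system of graphs over `P`, encoded on a single edge set `Λ` (which contains the
vertices as the elements of degree `1`), with degree map `d`, source and range maps `src`, `rng`
(valued in vertices), and partial multiplication `mul` (meaningful when `rng a = src b`). -/
structure IsProductSystem (P : Submonoid G) (d : Λ → G) (src rng : Λ → Λ)
    (mul : Λ → Λ → Λ) : Prop where
  countable : Countable Λ
  d_mem : ∀ a, d a ∈ P
  d_src : ∀ a, d (src a) = 1
  d_rng : ∀ a, d (rng a) = 1
  src_vertex : ∀ v, d v = 1 → src v = v
  rng_vertex : ∀ v, d v = 1 → rng v = v
  d_mul : ∀ a b, rng a = src b → d (mul a b) = d a * d b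
  src_mul : ∀ a b, rng a = src b → src (mul a b) = src a
  rng_mul : ∀ a b, rng a = src b → rng (mul a b) = rng b
  mul_assoc' : ∀ a b c, rng a = src b → rng b = src c →
    mul (mul a b) c = mul a (mul b c)
  src_mul_self : ∀ a, mul (src a) a = a
  mul_rng_self : ∀ a, mul a (rng a) = a
  factor : ∀ p q : G, p ∈ P → q ∈ P → ∀ c, d c = p * q →
    ∃! ab : Λ × Λ, d ab.1 = p ∧ d ab.2 = q ∧ rng ab.1 = src ab.2 ∧ mul ab.1 ab.2 = c

/-- `a` is an initial segment of `c`: `c = a • b` for some (necessarily unique) `b`. -/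
def IsInit (src rng : Λ → Λ) (mul : Λ → Λ → Λ) (a c : Λ) : Prop :=
  ∃ b, rng a = src b ∧ mul a b = c

/-- The set of minimal common extensions of `μ` and `ν`. -/
def MCE (P : Submonoid G) (d : Λ → G) (src rng : Λ → Λ) (mul : Λ → Λ → Λ)
    (μ ν : Λ) : Set Λ :=
  {γ | IsInit src rng mul μ γ ∧ IsInit src rng mul ν γ ∧ IsLUB2 P (d μ) (d ν) (d γ)}

/-- The product system is finitely aligned. -/
def FinitelyAligned (P : Submonoid G) (d : Λ → G) (src rng : Λ → Λ)
    (mul : Λ → Λ → Λ) : Prop :=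
  ∀ μ ν : Λ, (MCE P d src rng mul μ ν).Finite

/-- The set of minimal common extensions of a set `S` of edges. -/
def MCEset (P : Submonoid G) (d : Λ → G) (src rng : Λ → Λ) (mul : Λ → Λ → Λ)
    (S : Set Λ) : Set Λ :=
  {γ | (∀ α ∈ S, IsInit src rng mul α γ) ∧ IsLUBFam P (d '' S) (d γ)}

/-- `∨F`: the union of `MCE(S)` over the nonempty subsets `S ⊆ F`. -/
def vee (P : Submonoid G) (d : Λ → G) (src rng : Λ → Λ) (mul : Λ → Λ → Λ)
    (F : Finset Λ) : Set Λ :=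
  {γ | ∃ S : Finset Λ, S.Nonempty ∧ S ⊆ F ∧ γ ∈ MCEset P d src rng mul ↑S}

/-- Given that `a` is an initial segment of `c`, the (unique) complementary segment;
junk value `c` otherwise. -/
def tail (src rng : Λ → Λ) (mul : Λ → Λ → Λ) (a c : Λ) : Λ :=
  if h : IsInit src rng mul a c then h.choose else c

section CstarFamilies

variable (P : Submonoid G) (d : Λ → G) (src rng : Λ → Λ) (mul : Λ → Λ → Λ)
variable {B : Type*} [CStarAlgebra B] [PartialOrder B] [StarOrderedRing B]

/-- A Toeplitz `E`-family in a C*-algebra `B` (conditions (1)–(4)). -/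
structure IsToeplitzFamily (t : Λ → B) : Prop where
  vertex_sa : ∀ v, d v = 1 → IsSelfAdjoint (t v)
  vertex_idem : ∀ v, d v = 1 → t v * t v = t v
  vertex_orth : ∀ v w, d v = 1 → d w = 1 → v ≠ w → t v * t w = 0
  mul_eq : ∀ a b, rng a = src b → t a * t b = t (mul a b)
  star_mul_self : ∀ a, star (t a) * t a = t (rng a)
  dom : ∀ p : G, p ∈ P → p ≠ 1 → ∀ v, d v = 1 → ∀ F : Finset Λ,
    (∀ a ∈ F, d a = p ∧ src a = v) → (∑ a ∈ F, t a * star (t a)) ≤ t v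

/-- The Nica-covariance/Cuntz–Krieger relation (5):
`tμ* tν = ∑_{γ = μα = νβ ∈ MCE(μ,ν)} tα tβ*`. -/
def TCKrel (t : Λ → B) : Prop :=
  ∀ μ ν : Λ, ∀ M : Finset Λ, ↑M = MCE P d src rng mul μ ν →
    star (t μ) * t ν =
      ∑ γ ∈ M, t (tail src rng mul μ γ) * star (t (tail src rng mul ν γ))

/-- A Toeplitz–Cuntz–Krieger `E`-family: conditions (1)–(5). -/
def IsTCKFamily (t : Λ → B) : Prop :=
  IsToeplitzFamily P d src rng mul t ∧ TCKrel P d src rng mul t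

/-- Condition (†): for every finite `R ⊆ P∖{1}`, every vertex `v`, and all finite sets
`F_p ⊆ s_p⁻¹(v)` (`p ∈ R`), the product `∏_{p ∈ R} (t_v − ∑_{a ∈ F_p} t_a t_a*)` is nonzero.
(The factors commute, so the product is stated for an arbitrary enumeration of `R`.) -/
def Dagger (t : Λ → B) : Prop :=
  ∀ R : List G, R.Nodup → (∀ p ∈ R, p ∈ P ∧ p ≠ 1) →
    ∀ v, d v = 1 → ∀ Fp : G → Finset Λ,
      (∀ p ∈ R, ∀ a ∈ Fp p, d a = p ∧ src a = v) →
        (R.map fun p => t v - ∑ a ∈ Fp p, t a * star (t a)).prod ≠ 0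

/-- The projection `Q^{∨F}_l = t_l t_l* ∏_{l α ∈ ∨F, d α ≠ 1} (t_{s(l)} − t_{lα} t_{lα}*)`.
(The factors commute, so the product is computed over an arbitrary enumeration.) -/
def Qproj (t : Λ → B) (F : Finset Λ) (l : Λ) : B :=
  if h : {α : Λ | d α ≠ 1 ∧ rng l = src α ∧ mul l α ∈ vee P d src rng mul F}.Finite then
    t l * star (t l) *
      (h.toFinset.toList.map fun α =>
        t (src l) - t (mul l α) * star (t (mul l α))).prod
  else 0

end CstarFamilies

/-- The positive cone `ℕ^k` inside `ℤ^k` (written multiplicatively). -/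
def posCone (k : ℕ) : Submonoid (Multiplicative (Fin k → ℤ)) where
  carrier := {g | ∀ i, 0 ≤ Multiplicative.toAdd g i}
  mul_mem' := by
    intro a b ha hb i
    simpa using add_nonneg (ha i) (hb i)
  one_mem' := by
    intro i
    simp

/-- The `i`-th standard generator of `ℕ^k ⊆ ℤ^k`. -/
def egen (k : ℕ) (i : Fin k) : Multiplicative (Fin k → ℤ) :=
  Multiplicative.ofAdd (Pi.single i 1)

end PSG
namespace PSG

/-!
Write `q_γ = t_γ t_γ*`, and `a ≼ c` when `a` is an initial segment of `c`. The `q_γ` commute,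
`q_μ q_ν` is the sum of the `q_γ` over `γ ∈ MCE(μ, ν)`, and `Q^{∨F}_a` is the largest projection
below `q_a` orthogonal to `q_γ` for every proper extension `γ ∈ ∨F` of `a`. So it is enough to
compare the proper extensions of `δ` in `∨F` with those of `m` in `∨H`, where `H ⊆ F` is such that
every edge of `F ∖ H` is an initial segment of `δ`; for `H = F ∖ {l}` this follows from `δ ∉ ∨H`.

Let `γ ∈ MCE(S)`, `S ⊆ F`, properly extend `δ`, and let `m ∈ MCE(U)`, `U ⊆ H`. The join `ζ` of
`U ∪ (S ∩ H)` below `γ` lies in `∨H` and extends `m`. If `ζ = m`, then `S ∩ H` is bounded by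
`m ≼ δ`, hence all of `S` is bounded by `δ`, and `γ = δ`. So `ζ` is a proper extension of `m` below
`γ`, whence `q_γ` is orthogonal to `Q^{∨H}_m`.
Conversely, if `η ∈ ∨H` properly extends `m`, then `η ⋠ δ` by maximality of `m`, so `MCE(δ, η)`
consists of proper extensions of `δ` in `∨F`, and `q_δ q_η` is orthogonal to `Q^{∨F}_δ`.
-/

section Order

variable {G : Type*} [Group G] {P : Submonoid G}

theorem qle_refl (g : G) : qle P g g := by
  simp only [qle, inv_mul_cancel, P.one_mem]

theorem qle.trans {a b c : G} (hab : qle P a b) (hbc : qle P b c) : qle P a c := by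
  simpa only [qle, mul_assoc, mul_inv_cancel_left] using P.mul_mem hab hbc

theorem QuasiLatticeOrdered.qle_antisymm (hP : QuasiLatticeOrdered P) {a b : G}
    (hab : qle P a b) (hba : qle P b a) : a = b :=
  inv_mul_eq_one.mp <| hP.1 (a⁻¹ * b) hab <| by simpa only [qle, mul_inv_rev, inv_inv] using hba

theorem IsLUBFam.qle_iff {D : Set G} {p r : G} (hp : IsLUBFam P D p) (hr : r ∈ P) :
    qle P p r ↔ ∀ x ∈ D, qle P x r :=
  ⟨fun hpr x hx => (hp.2.1 x hx).trans hpr, hp.2.2 r hr⟩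

theorem isLUBFam_singleton {p : G} (hp : p ∈ P) : IsLUBFam P {p} p :=
  ⟨hp, fun x hx => Set.eq_of_mem_singleton hx ▸ qle_refl x, fun _ _ h => h p rfl⟩

theorem isLUB2_iff_isLUBFam_union {D D' : Set G} {p q r : G} (hp : IsLUBFam P D p)
    (hq : IsLUBFam P D' q) : IsLUB2 P p q r ↔ IsLUBFam P (D ∪ D') r := by
  have bound_iff (s : G) (hs : s ∈ P) :
      (qle P p s ∧ qle P q s) ↔ ∀ x ∈ D ∪ D', qle P x s := by
    simp only [hp.qle_iff hs, hq.qle_iff hs, Set.mem_union, or_imp, forall_and]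
  constructor
  · rintro ⟨⟨hr, hpq⟩, hmin⟩
    exact ⟨hr, (bound_iff r hr).mp hpq, fun s hs h => hmin s ⟨hs, (bound_iff s hs).mpr h⟩⟩
  · rintro ⟨hr, hD, hmin⟩
    exact ⟨⟨hr, (bound_iff r hr).mpr hD⟩, fun s hs => hmin s hs.1 ((bound_iff s hs.1).mp hs.2)⟩

theorem QuasiLatticeOrdered.exists_isLUBFam (hP : QuasiLatticeOrdered P) {D : Finset G}
    (hD : D.Nonempty) (hDP : ∀ x ∈ D, x ∈ P) {r : G} (hr : r ∈ P) (hDr : ∀ x ∈ D, qle P x r) :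
    ∃ p, IsLUBFam P (D : Set G) p := by
  induction hD using Finset.Nonempty.cons_induction with
  | singleton a =>
    exact ⟨a, by simpa only [Finset.coe_singleton] using isLUBFam_singleton (hDP a (by simp))⟩
  | cons a D _ _ ih =>
    simp only [Finset.forall_mem_cons] at hDP hDr
    obtain ⟨p, hp⟩ := ih hDP.2 hDr.2
    obtain ⟨s, hs⟩ := hP.2 a hDP.1 p hp.1 ⟨r, hr, hDr.1, (hp.qle_iff hr).mpr hDr.2⟩
    refine ⟨s, ?_⟩
    rw [Finset.coe_cons, Set.insert_eq]
    exact (isLUB2_iff_isLUBFam_union (isLUBFam_singleton hDP.1) hp).mp hs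

end Order

section Edges

variable {G : Type*} [Group G] {Λ : Type*} {P : Submonoid G} {d : Λ → G} {src rng : Λ → Λ}
  {mul : Λ → Λ → Λ}

local infix:50 "≼" => IsInit src rng mul

local prefix:max "⋁" => vee P d src rng mul

/-- The proper extensions of `a` in `∨F`. They are the products `aα` indexing the factors of
`Q^{∨F}_a`; properness is stated as `γ ≠ a` instead of `d α ≠ 1`. -/
def properExt (P : Submonoid G) (d : Λ → G) (src rng : Λ → Λ) (mul : Λ → Λ → Λ)
    (F : Finset Λ) (a : Λ) : Set Λ :=
  {γ | γ ∈ vee P d src rng mul F ∧ IsInit src rng mul a γ ∧ γ ≠ a}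

theorem vee_mono {F F' : Finset Λ} (h : F ⊆ F') : ⋁F ⊆ ⋁F' :=
  fun _ ⟨S, hS, hSF, hγ⟩ => ⟨S, hS, hSF.trans h, hγ⟩

theorem isInit_of_mem_vee_diff_vee_erase {F : Finset Λ} {l δ : Λ}
    (hδ : δ ∈ ⋁F \ ⋁(F.erase l)) : l ≼ δ := by
  obtain ⟨⟨S, hS, hSF, hδS⟩, hδ'⟩ := hδ
  by_contra hlδ
  have hlS : l ∉ S := fun hl => hlδ (hδS.1 l hl)
  exact hδ' ⟨S, hS, Finset.subset_erase.mpr ⟨hSF, hlS⟩, hδS⟩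

namespace IsProductSystem

theorem mul_inj (hPS : IsProductSystem P d src rng mul) {a b x y : Λ} (hax : rng a = src x)
    (hby : rng b = src y) (hd : d a = d b) (h : mul a x = mul b y) : a = b ∧ x = y := by
  have hdxy : d x = d y := by
    have := congrArg d h
    rwa [hPS.d_mul a x hax, hPS.d_mul b y hby, hd, mul_right_inj] at this
  have := (hPS.factor _ _ (hPS.d_mem a) (hPS.d_mem x) _ (hPS.d_mul a x hax)).unique
    (y₁ := (a, x)) (y₂ := (b, y)) ⟨rfl, rfl, hax, rfl⟩ ⟨hd.symm, hdxy.symm, hby, h.symm⟩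
  exact Prod.mk.inj this

theorem mul_eq_left_iff (hPS : IsProductSystem P d src rng mul) {a x : Λ}
    (hax : rng a = src x) : mul a x = a ↔ d x = 1 := by
  constructor
  · intro h
    simpa only [hPS.d_mul a x hax, mul_eq_left] using congrArg d h
  · intro hx
    rw [← hPS.src_vertex x hx, ← hax, hPS.mul_rng_self]

theorem isInit_refl (hPS : IsProductSystem P d src rng mul) (a : Λ) : a ≼ a :=
  ⟨rng a, (hPS.src_vertex _ (hPS.d_rng a)).symm, hPS.mul_rng_self a⟩

theorem isInit_trans (hPS : IsProductSystem P d src rng mul) {a b c : Λ} (hab : a ≼ b)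
    (hbc : b ≼ c) : a ≼ c := by
  obtain ⟨x, hx, rfl⟩ := hab
  obtain ⟨y, hy, rfl⟩ := hbc
  rw [hPS.rng_mul a x hx] at hy
  exact ⟨mul x y, by rw [hPS.src_mul x y hy, hx], (hPS.mul_assoc' a x y hx hy).symm⟩

theorem qle_of_isInit (hPS : IsProductSystem P d src rng mul) {a c : Λ} (h : a ≼ c) :
    qle P (d a) (d c) := by
  obtain ⟨x, hx, rfl⟩ := h
  rw [qle, hPS.d_mul a x hx, inv_mul_cancel_left]
  exact hPS.d_mem x

theorem eq_of_isInit_of_d_eq (hPS : IsProductSystem P d src rng mul) {a b c : Λ} (ha : a ≼ c)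
    (hb : b ≼ c) (hd : d a = d b) : a = b := by
  obtain ⟨x, hx, hxc⟩ := ha
  obtain ⟨y, hy, hyc⟩ := hb
  exact (hPS.mul_inj hx hy hd (hxc.trans hyc.symm)).1

theorem exists_isInit_of_qle (hPS : IsProductSystem P d src rng mul) {p : G} {c : Λ}
    (hp : p ∈ P) (hpc : qle P p (d c)) : ∃ a, d a = p ∧ a ≼ c := by
  obtain ⟨⟨a, b⟩, ⟨ha, -, hab, hc⟩, -⟩ :=
    hPS.factor p (p⁻¹ * d c) hp hpc c (mul_inv_cancel_left p (d c)).symm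
  exact ⟨a, ha, b, hab, hc⟩

theorem isInit_iff_qle (hPS : IsProductSystem P d src rng mul) {a b c : Λ} (ha : a ≼ c)
    (hb : b ≼ c) : a ≼ b ↔ qle P (d a) (d b) := by
  refine ⟨hPS.qle_of_isInit, fun h => ?_⟩
  obtain ⟨a', hd, ha'⟩ := hPS.exists_isInit_of_qle (hPS.d_mem a) h
  rwa [hPS.eq_of_isInit_of_d_eq ha (hPS.isInit_trans ha' hb) hd.symm]

theorem isInit_antisymm (hPS : IsProductSystem P d src rng mul) (hP : QuasiLatticeOrdered P)
    {a b : Λ} (hab : a ≼ b) (hba : b ≼ a) : a = b :=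
  hPS.eq_of_isInit_of_d_eq hab (hPS.isInit_refl b)
    (hP.qle_antisymm (hPS.qle_of_isInit hab) (hPS.qle_of_isInit hba))

theorem isInit_of_mem_MCEset (hPS : IsProductSystem P d src rng mul) {S : Set Λ} {γ e c : Λ}
    (hγ : γ ∈ MCEset P d src rng mul S) (hγc : γ ≼ c) (hec : e ≼ c) (hSe : ∀ α ∈ S, α ≼ e) :
    γ ≼ e := by
  rw [hPS.isInit_iff_qle hγc hec, hγ.2.qle_iff (hPS.d_mem e)]
  exact Set.forall_mem_image.mpr fun α hα => hPS.qle_of_isInit (hSe α hα)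

theorem exists_mem_MCEset (hPS : IsProductSystem P d src rng mul) (hP : QuasiLatticeOrdered P)
    {S : Finset Λ} (hS : S.Nonempty) {c : Λ} (hSc : ∀ α ∈ S, α ≼ c) :
    ∃ η ∈ MCEset P d src rng mul (S : Set Λ), η ≼ c := by
  have hDc : ∀ x ∈ S.image d, qle P x (d c) :=
    Finset.forall_mem_image.mpr fun α hα => hPS.qle_of_isInit (hSc α hα)
  obtain ⟨p, hp⟩ := hP.exists_isLUBFam (hS.image d)
    (Finset.forall_mem_image.mpr fun α _ => hPS.d_mem α) (hPS.d_mem c) hDc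
  obtain ⟨η, rfl, hηc⟩ := hPS.exists_isInit_of_qle hp.1 ((hp.qle_iff (hPS.d_mem c)).mpr hDc)
  rw [Finset.coe_image] at hp
  exact ⟨η, ⟨fun α hα => (hPS.isInit_iff_qle (hSc α hα) hηc).mpr
    (hp.2.1 _ (Set.mem_image_of_mem d hα)), hp⟩, hηc⟩

theorem MCEset_singleton (hPS : IsProductSystem P d src rng mul) (hP : QuasiLatticeOrdered P)
    (a : Λ) : MCEset P d src rng mul {a} = {a} := by
  refine Set.Subset.antisymm (fun γ hγ => ?_) (Set.singleton_subset_iff.mpr ⟨?_, ?_⟩)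
  · have haγ : a ≼ γ := hγ.1 a rfl
    refine hPS.isInit_antisymm hP (hPS.isInit_of_mem_MCEset hγ (hPS.isInit_refl γ) haγ ?_) haγ
    exact fun _ hα => hα ▸ hPS.isInit_refl a
  · exact fun _ hα => hα ▸ hPS.isInit_refl a
  · rw [Set.image_singleton]
    exact isLUBFam_singleton (hPS.d_mem a)

theorem mem_MCE_iff_mem_MCEset_union (hPS : IsProductSystem P d src rng mul) {S T : Set Λ}
    {μ ν γ : Λ} (hμ : μ ∈ MCEset P d src rng mul S) (hν : ν ∈ MCEset P d src rng mul T) :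
    γ ∈ MCE P d src rng mul μ ν ↔ μ ≼ γ ∧ ν ≼ γ ∧ γ ∈ MCEset P d src rng mul (S ∪ T) := by
  have hlub : IsLUB2 P (d μ) (d ν) (d γ) ↔ IsLUBFam P (d '' (S ∪ T)) (d γ) := by
    rw [Set.image_union]
    exact isLUB2_iff_isLUBFam_union hμ.2 hν.2
  constructor
  · rintro ⟨hμγ, hνγ, h⟩
    refine ⟨hμγ, hνγ, ?_, hlub.mp h⟩
    rintro α (hα | hα)
    · exact hPS.isInit_trans (hμ.1 α hα) hμγ
    · exact hPS.isInit_trans (hν.1 α hα) hνγ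
  · rintro ⟨hμγ, hνγ, -, h⟩
    exact ⟨hμγ, hνγ, hlub.mpr h⟩

theorem mem_vee_of_mem_MCE (hPS : IsProductSystem P d src rng mul) {F : Finset Λ} {μ ν γ : Λ}
    (hμ : μ ∈ ⋁F) (hν : ν ∈ ⋁F) (hγ : γ ∈ MCE P d src rng mul μ ν) : γ ∈ ⋁F := by
  obtain ⟨S, hS, hSF, hμS⟩ := hμ
  obtain ⟨T, -, hTF, hνT⟩ := hν
  refine ⟨S ∪ T, hS.mono Finset.subset_union_left, Finset.union_subset hSF hTF, ?_⟩
  rw [Finset.coe_union]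
  exact ((hPS.mem_MCE_iff_mem_MCEset_union hμS hνT).mp hγ).2.2

theorem finite_MCEset (hPS : IsProductSystem P d src rng mul) (hP : QuasiLatticeOrdered P)
    (hFA : FinitelyAligned P d src rng mul) {S : Finset Λ} (hS : S.Nonempty) :
    (MCEset P d src rng mul (S : Set Λ)).Finite := by
  induction hS using Finset.Nonempty.cons_induction with
  | singleton a =>
    rw [Finset.coe_singleton, hPS.MCEset_singleton hP]
    exact Set.finite_singleton a
  | cons a S ha hS ih =>
    refine (ih.biUnion fun η _ => hFA a η).subset fun γ hγ => ?_
    have haS : ∀ α ∈ Finset.cons a S ha, α ≼ γ := hγ.1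
    rw [Finset.forall_mem_cons] at haS
    obtain ⟨η, hη, hηγ⟩ := hPS.exists_mem_MCEset hP hS haS.2
    have ha_mem : a ∈ MCEset P d src rng mul {a} := (hPS.MCEset_singleton hP a).ge rfl
    rw [Finset.coe_cons, Set.insert_eq] at hγ
    exact Set.mem_biUnion hη
      ((hPS.mem_MCE_iff_mem_MCEset_union ha_mem hη).mpr ⟨haS.1, hηγ, hγ⟩)

theorem finite_vee (hPS : IsProductSystem P d src rng mul) (hP : QuasiLatticeOrdered P)
    (hFA : FinitelyAligned P d src rng mul) (F : Finset Λ) : (⋁F).Finite := by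
  have hfin := (F.powerset.filter Finset.Nonempty).finite_toSet.biUnion
    fun S hS => hPS.finite_MCEset hP hFA (Finset.mem_filter.mp hS).2
  refine hfin.subset fun γ ⟨S, hS, hSF, hγ⟩ => Set.mem_biUnion ?_ hγ
  exact Finset.mem_filter.mpr ⟨Finset.mem_powerset.mpr hSF, hS⟩

theorem mem_properExt_iff (hPS : IsProductSystem P d src rng mul) {F : Finset Λ} {a γ : Λ} :
    γ ∈ properExt P d src rng mul F a ↔
      ∃ α, (d α ≠ 1 ∧ rng a = src α ∧ mul a α ∈ ⋁F) ∧ mul a α = γ := by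
  constructor
  · rintro ⟨hγF, ⟨α, hα, rfl⟩, hne⟩
    exact ⟨α, ⟨(hPS.mul_eq_left_iff hα).not.mp hne, hα, hγF⟩, rfl⟩
  · rintro ⟨α, ⟨hdα, hα, hγF⟩, rfl⟩
    exact ⟨hγF, ⟨α, hα, rfl⟩, (hPS.mul_eq_left_iff hα).not.mpr hdα⟩

theorem finite_Qproj_index (hPS : IsProductSystem P d src rng mul) (hP : QuasiLatticeOrdered P)
    (hFA : FinitelyAligned P d src rng mul) (F : Finset Λ) (a : Λ) :
    {α : Λ | d α ≠ 1 ∧ rng a = src α ∧ mul a α ∈ ⋁F}.Finite := by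
  refine Set.Finite.of_finite_image (f := mul a) ((hPS.finite_vee hP hFA F).subset ?_) ?_
  · exact Set.image_subset_iff.mpr fun α hα => hα.2.2
  · exact fun α hα β hβ h => (hPS.mul_inj hα.2.1 hβ.2.1 rfl h).2

theorem exists_mem_properExt_isInit (hPS : IsProductSystem P d src rng mul)
    (hP : QuasiLatticeOrdered P) {F H : Finset Λ} {δ m γ : Λ}
    (hδ : ∀ α ∈ F, α ∉ H → α ≼ δ) (hm : m ∈ ⋁H) (hmδ : m ≼ δ)
    (hγ : γ ∈ properExt P d src rng mul F δ) :
    ∃ ζ ∈ properExt P d src rng mul H m, ζ ≼ γ := by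
  obtain ⟨⟨S, -, hSF, hγS⟩, hδγ, hne⟩ := hγ
  obtain ⟨U, hU, hUH, hmU⟩ := hm
  have hmγ : m ≼ γ := hPS.isInit_trans hmδ hδγ
  let V := U ∪ S.filter (· ∈ H)
  have hV : V.Nonempty := hU.mono Finset.subset_union_left
  have hVH : V ⊆ H := Finset.union_subset hUH fun α hα => (Finset.mem_filter.mp hα).2
  have hVγ : ∀ α ∈ V, α ≼ γ := fun α hα => (Finset.mem_union.mp hα).elim
    (fun h => hPS.isInit_trans (hmU.1 α h) hmγ) (fun h => hγS.1 α (Finset.mem_filter.mp h).1)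
  obtain ⟨ζ, hζV, hζγ⟩ := hPS.exists_mem_MCEset hP hV hVγ
  have hmζ : m ≼ ζ := hPS.isInit_of_mem_MCEset hmU hmγ hζγ fun α hα =>
    hζV.1 α (Finset.mem_union_left _ hα)
  refine ⟨ζ, ⟨⟨V, hV, hVH, hζV⟩, hmζ, ?_⟩, hζγ⟩
  rintro rfl
  have hSδ : ∀ α ∈ S, α ≼ δ := fun α hα => by
    by_cases hαH : α ∈ H
    · exact hPS.isInit_trans
        (hζV.1 α (Finset.mem_union_right _ (Finset.mem_filter.mpr ⟨hα, hαH⟩))) hmδ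
    · exact hδ α (hSF hα) hαH
  have hγδ : γ ≼ δ := hPS.isInit_of_mem_MCEset hγS (hPS.isInit_refl γ) hδγ hSδ
  exact hne (hPS.isInit_antisymm hP hγδ hδγ)

theorem MCE_subset_properExt (hPS : IsProductSystem P d src rng mul)
    (hP : QuasiLatticeOrdered P) {F H : Finset Λ} (hHF : H ⊆ F) {δ m η : Λ} (hδ : δ ∈ ⋁F)
    (hmδ : m ≼ δ) (hmax : ∀ μ ∈ ⋁H, μ ≼ δ → qle P (d μ) (d m))
    (hη : η ∈ properExt P d src rng mul H m) :
    MCE P d src rng mul δ η ⊆ properExt P d src rng mul F δ := by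
  obtain ⟨hηH, hmη, hne⟩ := hη
  intro γ hγ
  refine ⟨hPS.mem_vee_of_mem_MCE hδ (vee_mono hHF hηH) hγ, hγ.1, ?_⟩
  rintro rfl
  have hηγ : η ≼ γ := hγ.2.1
  have hηm : η ≼ m := (hPS.isInit_iff_qle hηγ hmδ).mpr (hmax η hηH hηγ)
  exact hne (hPS.isInit_antisymm hP hηm hmη)

end IsProductSystem

end Edges

section RangeProjections

theorem list_prod_mul_eq_zero {R : Type*} [MonoidWithZero R] {a c : R} {L : List R}
    (hc : ∀ b ∈ L, Commute b c) (ha : a ∈ L) (hac : a * c = 0) : L.prod * c = 0 := by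
  obtain ⟨L₁, L₂, rfl⟩ := List.append_of_mem ha
  have hL₂ : Commute L₂.prod c := Commute.list_prod_left L₂ c fun b hb => hc b (by simp [hb])
  rw [List.prod_append, List.prod_cons, mul_assoc, mul_assoc, hL₂.eq, ← mul_assoc a, hac,
    zero_mul, mul_zero]

/-- The range projection `t_a t_a*`. -/
def rangeProj {Λ B : Type*} [Mul B] [Star B] (t : Λ → B) (a : Λ) : B :=
  t a * star (t a)

variable {G : Type*} [Group G] {Λ : Type*} {P : Submonoid G} {d : Λ → G} {src rng : Λ → Λ}
  {mul : Λ → Λ → Λ} {B : Type*} [CStarAlgebra B] {t : Λ → B}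

local infix:50 "≼" => IsInit src rng mul

theorem IsProductSystem.exists_Qproj_eq_mul_list_prod (hPS : IsProductSystem P d src rng mul)
    (hP : QuasiLatticeOrdered P) (hFA : FinitelyAligned P d src rng mul) (t : Λ → B)
    (F : Finset Λ) (a : Λ) :
    ∃ L : List B, Qproj P d src rng mul t F a = rangeProj t a * L.prod ∧
      ∀ b, b ∈ L ↔ ∃ γ ∈ properExt P d src rng mul F a, t (src a) - rangeProj t γ = b := by
  refine ⟨_, dif_pos (hPS.finite_Qproj_index hP hFA F a), fun b => ?_⟩
  simp only [List.mem_map, Finset.mem_toList, Set.Finite.mem_toFinset, Set.mem_ofPred_eq,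
    hPS.mem_properExt_iff, exists_exists_and_eq_and, rangeProj]

variable [PartialOrder B]

local notation "𝒬" => Qproj P d src rng mul t

namespace IsToeplitzFamily

theorem src_eq_rangeProj (ht : IsToeplitzFamily P d src rng mul t)
    (hPS : IsProductSystem P d src rng mul) (a : Λ) : t (src a) = rangeProj t (src a) := by
  rw [rangeProj, (ht.vertex_sa _ (hPS.d_src a)).star_eq, ht.vertex_idem _ (hPS.d_src a)]

theorem rangeProj_mul_of_isInit (ht : IsToeplitzFamily P d src rng mul t)
    (hPS : IsProductSystem P d src rng mul) {a c : Λ} (hac : a ≼ c) :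
    rangeProj t a * rangeProj t c = rangeProj t c := by
  obtain ⟨b, hab, rfl⟩ := hac
  have ha : t a * t (rng a) = t a := by
    rw [ht.mul_eq _ _ (hPS.src_vertex _ (hPS.d_rng a)).symm, hPS.mul_rng_self]
  simp only [rangeProj, ← ht.mul_eq a b hab]
  calc t a * star (t a) * (t a * t b * star (t a * t b))
      = t a * (star (t a) * t a) * t b * star (t a * t b) := by simp only [mul_assoc]
    _ = t a * t b * star (t a * t b) := by rw [ht.star_mul_self, ha]

theorem src_mul_rangeProj (ht : IsToeplitzFamily P d src rng mul t)
    (hPS : IsProductSystem P d src rng mul) {a c : Λ} (hac : a ≼ c) :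
    t (src a) * rangeProj t c = rangeProj t c := by
  have hsrc : src a ≼ a := ⟨a, hPS.rng_vertex _ (hPS.d_src a), hPS.src_mul_self a⟩
  rw [ht.src_eq_rangeProj hPS, ht.rangeProj_mul_of_isInit hPS (hPS.isInit_trans hsrc hac)]

theorem mul_tail (ht : IsToeplitzFamily P d src rng mul t) {a c : Λ} (hac : a ≼ c) :
    t a * t (tail src rng mul a c) = t c := by
  rw [tail, dif_pos hac, ht.mul_eq _ _ hac.choose_spec.1, hac.choose_spec.2]

theorem commute_src_sub_rangeProj (ht : IsToeplitzFamily P d src rng mul t)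
    (hPS : IsProductSystem P d src rng mul) {x : B} (hx : ∀ c, Commute (rangeProj t c) x)
    (a γ : Λ) : Commute (t (src a) - rangeProj t γ) x := by
  rw [ht.src_eq_rangeProj hPS]
  exact (hx _).sub_left (hx γ)

theorem commute_Qproj (ht : IsToeplitzFamily P d src rng mul t) (hP : QuasiLatticeOrdered P)
    (hPS : IsProductSystem P d src rng mul) (hFA : FinitelyAligned P d src rng mul)
    {x : B} (hx : ∀ c, Commute (rangeProj t c) x) (F : Finset Λ) (a : Λ) :
    Commute (𝒬 F a) x := by
  obtain ⟨L, hL, hmem⟩ := hPS.exists_Qproj_eq_mul_list_prod hP hFA t F a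
  rw [hL]
  refine (hx a).mul_left (Commute.list_prod_left L x fun b hb => ?_)
  obtain ⟨γ, -, rfl⟩ := (hmem b).mp hb
  exact ht.commute_src_sub_rangeProj hPS hx a γ

end IsToeplitzFamily

namespace IsTCKFamily

theorem rangeProj_mul_rangeProj (ht : IsTCKFamily P d src rng mul t)
    (hFA : FinitelyAligned P d src rng mul) (μ ν : Λ) :
    rangeProj t μ * rangeProj t ν = ∑ γ ∈ (hFA μ ν).toFinset, rangeProj t γ := by
  calc rangeProj t μ * rangeProj t ν = t μ * (star (t μ) * t ν) * star (t ν) := by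
        simp only [rangeProj, mul_assoc]
    _ = ∑ γ ∈ (hFA μ ν).toFinset, t μ * (t (tail src rng mul μ γ) *
          star (t (tail src rng mul ν γ))) * star (t ν) := by
        rw [ht.2 μ ν _ (hFA μ ν).coe_toFinset, Finset.mul_sum, Finset.sum_mul]
    _ = ∑ γ ∈ (hFA μ ν).toFinset, rangeProj t γ := by
        refine Finset.sum_congr rfl fun γ hγ => ?_
        have hγ := (hFA μ ν).mem_toFinset.mp hγ
        rw [← mul_assoc, mul_assoc, ← star_mul, ht.1.mul_tail hγ.1, ht.1.mul_tail hγ.2.1,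
          rangeProj]

theorem commute_rangeProj (ht : IsTCKFamily P d src rng mul t)
    (hFA : FinitelyAligned P d src rng mul) (μ ν : Λ) :
    Commute (rangeProj t μ) (rangeProj t ν) := by
  have hsa (γ : Λ) : IsSelfAdjoint (rangeProj t γ) := IsSelfAdjoint.mul_star_self (t γ)
  rw [IsSelfAdjoint.commute_iff (hsa μ) (hsa ν), ht.rangeProj_mul_rangeProj hFA]
  exact isSelfAdjoint_sum _ fun γ _ => hsa γ

theorem commute_Qproj_rangeProj (ht : IsTCKFamily P d src rng mul t)
    (hP : QuasiLatticeOrdered P) (hPS : IsProductSystem P d src rng mul)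
    (hFA : FinitelyAligned P d src rng mul) (F : Finset Λ) (a c : Λ) :
    Commute (𝒬 F a) (rangeProj t c) :=
  ht.1.commute_Qproj hP hPS hFA (fun b => ht.commute_rangeProj hFA b c) F a

theorem Qproj_mul_rangeProj_of_isInit (ht : IsTCKFamily P d src rng mul t)
    (hP : QuasiLatticeOrdered P) (hPS : IsProductSystem P d src rng mul)
    (hFA : FinitelyAligned P d src rng mul) (F : Finset Λ) {a c : Λ} (hca : c ≼ a) :
    𝒬 F a * rangeProj t c = 𝒬 F a := by
  obtain ⟨L, hL, -⟩ := hPS.exists_Qproj_eq_mul_list_prod hP hFA t F a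
  rw [(ht.commute_Qproj_rangeProj hP hPS hFA F a c).eq, hL, ← mul_assoc,
    ht.1.rangeProj_mul_of_isInit hPS hca]

theorem Qproj_mul_rangeProj_of_mem_properExt (ht : IsTCKFamily P d src rng mul t)
    (hP : QuasiLatticeOrdered P) (hPS : IsProductSystem P d src rng mul)
    (hFA : FinitelyAligned P d src rng mul) {F : Finset Λ} {a γ : Λ}
    (hγ : γ ∈ properExt P d src rng mul F a) : 𝒬 F a * rangeProj t γ = 0 := by
  obtain ⟨L, hL, hmem⟩ := hPS.exists_Qproj_eq_mul_list_prod hP hFA t F a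
  have hfactor : (t (src a) - rangeProj t γ) * rangeProj t γ = 0 := by
    rw [sub_mul, ht.1.src_mul_rangeProj hPS hγ.2.1,
      ht.1.rangeProj_mul_of_isInit hPS (hPS.isInit_refl γ), sub_self]
  have hcomm : ∀ b ∈ L, Commute b (rangeProj t γ) := by
    intro b hb
    obtain ⟨γ', -, rfl⟩ := (hmem b).mp hb
    exact ht.1.commute_src_sub_rangeProj hPS (fun c => ht.commute_rangeProj hFA c γ) a γ'
  rw [hL, mul_assoc, list_prod_mul_eq_zero hcomm ((hmem _).mpr ⟨γ, hγ, rfl⟩) hfactor, mul_zero]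

theorem mul_Qproj_eq_self (ht : IsTCKFamily P d src rng mul t) (hP : QuasiLatticeOrdered P)
    (hPS : IsProductSystem P d src rng mul) (hFA : FinitelyAligned P d src rng mul)
    {F : Finset Λ} {a : Λ} {x : B} (hxa : x * rangeProj t a = x)
    (hxγ : ∀ γ ∈ properExt P d src rng mul F a, x * rangeProj t γ = 0) : x * 𝒬 F a = x := by
  obtain ⟨L, hL, hmem⟩ := hPS.exists_Qproj_eq_mul_list_prod hP hFA t F a
  have hcomm : Commute (t (src a)) (rangeProj t a) := by
    rw [ht.1.src_eq_rangeProj hPS]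
    exact ht.commute_rangeProj hFA (src a) a
  have hxsrc : x * t (src a) = x := by
    rw [← hxa, mul_assoc, ← hcomm.eq, ht.1.src_mul_rangeProj hPS (hPS.isInit_refl a)]
  rw [hL, ← mul_assoc, hxa]
  refine List.prod_induction (fun b => x * b = x) (fun b c hb hc => ?_) (mul_one x) fun b hb => ?_
  · rw [← mul_assoc, hb, hc]
  · obtain ⟨γ, hγ, rfl⟩ := (hmem b).mp hb
    rw [mul_sub, hxsrc, hxγ γ hγ, sub_zero]

theorem Qproj_mul_Qproj_eq_left (ht : IsTCKFamily P d src rng mul t)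
    (hP : QuasiLatticeOrdered P) (hPS : IsProductSystem P d src rng mul)
    (hFA : FinitelyAligned P d src rng mul) {F H : Finset Λ} {δ m : Λ} (hmδ : m ≼ δ)
    (hMCE : ∀ η ∈ properExt P d src rng mul H m,
      MCE P d src rng mul δ η ⊆ properExt P d src rng mul F δ) :
    𝒬 F δ * 𝒬 H m = 𝒬 F δ := by
  refine ht.mul_Qproj_eq_self hP hPS hFA
    (ht.Qproj_mul_rangeProj_of_isInit hP hPS hFA F hmδ) fun η hη => ?_
  calc 𝒬 F δ * rangeProj t η = 𝒬 F δ * (rangeProj t δ * rangeProj t η) := by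
        rw [← mul_assoc, ht.Qproj_mul_rangeProj_of_isInit hP hPS hFA F (hPS.isInit_refl δ)]
    _ = ∑ γ ∈ (hFA δ η).toFinset, 𝒬 F δ * rangeProj t γ := by
        rw [ht.rangeProj_mul_rangeProj hFA, Finset.mul_sum]
    _ = 0 := Finset.sum_eq_zero fun γ hγ =>
        ht.Qproj_mul_rangeProj_of_mem_properExt hP hPS hFA
          (hMCE η hη ((hFA δ η).mem_toFinset.mp hγ))

theorem Qproj_mul_rangeProj_mul_Qproj (ht : IsTCKFamily P d src rng mul t)
    (hP : QuasiLatticeOrdered P) (hPS : IsProductSystem P d src rng mul)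
    (hFA : FinitelyAligned P d src rng mul) {F H : Finset Λ} {δ m : Λ}
    (hext : ∀ γ ∈ properExt P d src rng mul F δ, ∃ η ∈ properExt P d src rng mul H m, η ≼ γ) :
    𝒬 H m * rangeProj t δ * 𝒬 F δ = 𝒬 H m * rangeProj t δ := by
  refine ht.mul_Qproj_eq_self hP hPS hFA ?_ fun γ hγ => ?_
  · rw [mul_assoc, ht.1.rangeProj_mul_of_isInit hPS (hPS.isInit_refl δ)]
  · obtain ⟨η, hη, hηγ⟩ := hext γ hγ
    calc 𝒬 H m * rangeProj t δ * rangeProj t γ = 𝒬 H m * (rangeProj t η * rangeProj t γ) := by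
          rw [mul_assoc, ht.1.rangeProj_mul_of_isInit hPS hγ.2.1,
            ht.1.rangeProj_mul_of_isInit hPS hηγ]
      _ = 0 := by
          rw [← mul_assoc, ht.Qproj_mul_rangeProj_of_mem_properExt hP hPS hFA hη, zero_mul]

end IsTCKFamily

end RangeProjections

theorem stmt3_general {G : Type*} [Group G] {Λ : Type*} {P : Submonoid G}
    (hP : QuasiLatticeOrdered P) {d : Λ → G} {src rng : Λ → Λ} {mul : Λ → Λ → Λ}
    (hPS : IsProductSystem P d src rng mul) (hFA : FinitelyAligned P d src rng mul)
    {B : Type*} [CStarAlgebra B] [PartialOrder B] {t : Λ → B}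
    (ht : IsTCKFamily P d src rng mul t) {F H : Finset Λ} (hHF : H ⊆ F) {δ m : Λ}
    (hδ : δ ∈ vee P d src rng mul F) (hFδ : ∀ α ∈ F, α ∉ H → IsInit src rng mul α δ)
    (hm : m ∈ vee P d src rng mul H) (hmδ : IsInit src rng mul m δ)
    (hmax : ∀ μ ∈ vee P d src rng mul H, IsInit src rng mul μ δ → qle P (d μ) (d m)) :
    Qproj P d src rng mul t F δ = Qproj P d src rng mul t H m * rangeProj t δ := by
  have hcomm : Commute (Qproj P d src rng mul t F δ)
      (Qproj P d src rng mul t H m * rangeProj t δ) :=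
    ht.1.commute_Qproj hP hPS hFA (fun c =>
      (ht.commute_Qproj_rangeProj hP hPS hFA H m c).symm.mul_right
        (ht.commute_rangeProj hFA c δ)) F δ
  calc Qproj P d src rng mul t F δ
      = Qproj P d src rng mul t F δ * (Qproj P d src rng mul t H m * rangeProj t δ) := by
        rw [← mul_assoc, ht.Qproj_mul_Qproj_eq_left hP hPS hFA hmδ fun η =>
            hPS.MCE_subset_properExt hP hHF hδ hmδ hmax,
          ht.Qproj_mul_rangeProj_of_isInit hP hPS hFA F (hPS.isInit_refl δ)]
    _ = Qproj P d src rng mul t H m * rangeProj t δ * Qproj P d src rng mul t F δ := hcomm.eq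
    _ = Qproj P d src rng mul t H m * rangeProj t δ :=
        ht.Qproj_mul_rangeProj_mul_Qproj hP hPS hFA fun γ =>
          hPS.exists_mem_properExt_isInit hP hFδ hm hmδ

/-- Lemma 7.6: `Q^{∨F}_δ = Q^{∨G}_{μ_δ} t_δ t_δ*` for `δ ∈ ∨F ∖ ∨G`, `G = F ∖ {λ}`. -/
theorem stmt3 {G : Type*} [Group G] {Λ : Type*} (P : Submonoid G)
    (hQLO : QuasiLatticeOrdered P)
    (d : Λ → G) (src rng : Λ → Λ) (mul : Λ → Λ → Λ)
    (hPS : IsProductSystem P d src rng mul)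
    (hFA : FinitelyAligned P d src rng mul)
    {B : Type*} [CStarAlgebra B] [PartialOrder B] [StarOrderedRing B]
    (t : Λ → B) (ht : IsTCKFamily P d src rng mul t)
    (F : Finset Λ) (hsrc : ∀ a ∈ F, src a ∈ F)
    (l : Λ) (hl : l ∈ F) (hdl : d l ≠ 1) :
    ∀ δ ∈ vee P d src rng mul F \ vee P d src rng mul (F.erase l),
      ∀ m : Λ,
        (m ∈ vee P d src rng mul (F.erase l) ∧ IsInit src rng mul m δ ∧
          ∀ μ ∈ vee P d src rng mul (F.erase l), IsInit src rng mul μ δ →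
            qle P (d μ) (d m)) →
        Qproj P d src rng mul t F δ =
          Qproj P d src rng mul t (F.erase l) m * (t δ * star (t δ)) := by
  intro δ hδ m ⟨hm, hmδ, hmax⟩
  refine stmt3_general hQLO hPS hFA ht (F.erase_subset l) hδ.1 (fun α hα hαl => ?_) hm hmδ hmax
  obtain rfl : α = l := by simpa [hα] using hαl
  exact isInit_of_mem_vee_diff_vee_erase hδ

end PSG
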